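/- arXiv:math/0309189 — 2 statements merged into one kernel-verified Lean document; each statement's English description precedes it below -/
import Mathlib

section
/- Fix an integer t ≥ 1 and integers a_1,…,a_t ≥ 1 and b_1,…,b_t ≥ 1 with b_i ≥ a_i for all i. Set S = a_1 + ⋯ + a_t, p_i = a_1 + ⋯ + a_{i−1}, q_i = a_{i+1} + ⋯ + a_t + b_i, and let h(z) = Σ_{i=1}^{t} z^{p_i} · (1 + z + ⋯ + z^{a_i − 1}) · (1 + z + ⋯ + z^{q_i − 1}) ∈ ℤ[z], with coefficients h_k. Then: (i) h_k = k + 1 for all 0 ≤ k ≤ S − 1; (ii) h_S = S − #{ i : b_i = a_i }; and (iii) deg h = S + max_i b_i − 2. -/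
open Polynomial Finset

/-!
Multiplying by `(1 - z)²` turns each summand of `h` into `z^pᵢ (1 - z^aᵢ) (1 - z^qᵢ)`. Since
`pᵢ + qᵢ = S + bᵢ - aᵢ` and the sum of the `z^pᵢ (1 - z^aᵢ)` telescopes to `1 - z^S`,
`(1 - z)² h = 1 - z^S - ∑ᵢ z^(S + bᵢ - aᵢ) + ∑ᵢ z^(S + bᵢ)`.
When `aᵢ ≤ bᵢ`, the right-hand side is `1` modulo `z^S`, so that `h` agrees up to degree `S - 1`
with `1 / (1 - z)² = ∑ₖ (k + 1) z^k`; at `z^S` the correction is `-1 - #{i : bᵢ = aᵢ}`. The degree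
of the right-hand side is visibly `S + max bᵢ`.
-/

section IntervalSums

variable {ι : Type*} [LinearOrder ι] [Fintype ι] [LocallyFiniteOrderBot ι]

lemma sum_Iio_add_sum_Ioi_add_self [LocallyFiniteOrderTop ι] {M : Type*} [AddCommMonoid M]
    (f : ι → M) (i : ι) : ∑ j ∈ Iio i, f j + ∑ j ∈ Ioi i, f j + f i = ∑ j, f j := by
  rw [Fintype.sum_eq_add_sum_compl i, ← Ioi_disjUnion_Iio, sum_disjUnion, add_comm (f i),
    add_comm (∑ j ∈ Iio i, f j)]

lemma sum_pow_sum_Iio_mul_one_sub_pow {A : Type*} [CommRing A] (x : A) (a : ι → ℕ) :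
    ∑ i, x ^ (∑ j ∈ Iio i, a j) * (1 - x ^ a i) = 1 - x ^ ∑ i, a i := by
  have telescope := prod_one_sub_ordered univ fun i ↦ 1 - x ^ a i
  simp only [sub_sub_cancel, prod_pow_eq_pow_sum, filter_gt_eq_Iio] at telescope
  simp only [telescope, sub_sub_cancel, mul_comm]

end IntervalSums

lemma one_sub_sq_mul_pow_mul_geom_sum_mul_geom_sum {A : Type*} [CommRing A] (x : A)
    (p m n : ℕ) :
    (1 - x) ^ 2 * (x ^ p * (∑ k ∈ range m, x ^ k) * ∑ k ∈ range n, x ^ k) =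
      x ^ p * (1 - x ^ m) * (1 - x ^ n) := by
  rw [← mul_neg_geom_sum x m, ← mul_neg_geom_sum x n]
  ring

lemma mk_add_one_mul_one_sub_X_sq {R : Type*} [CommRing R] :
    PowerSeries.mk (fun n ↦ (n + 1 : R)) * (1 - PowerSeries.X) ^ 2 = 1 := by
  have mk_one_sq : PowerSeries.mk (fun n ↦ (n + 1 : R)) = PowerSeries.mk 1 ^ 2 := by
    simp [PowerSeries.mk_one_pow_eq_mk_choose_add R 1, add_comm]
  rw [mk_one_sq, ← mul_pow, PowerSeries.mk_one_mul_one_sub_eq_one, one_pow]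

/-- The truncated subtraction makes the right-hand side `0` when `k < d`. -/
lemma coeff_X_pow_mul_mk_add_one {R : Type*} [Semiring R] (d k : ℕ) :
    (PowerSeries.X ^ d * PowerSeries.mk fun n ↦ (n + 1 : R)).coeff k = ((k + 1 - d : ℕ) : R) := by
  rw [PowerSeries.coeff_X_pow_mul', PowerSeries.coeff_mk]
  split_ifs with hdk
  · rw [Nat.sub_add_comm hdk, Nat.cast_add_one]
  · simp [Nat.sub_eq_zero_of_le (Nat.succ_le_of_lt (not_le.mp hdk))]

section HVector

/-- The K-polynomial read off from the Hilbert–Burch resolution of a codimension-2 arithmetically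
Cohen–Macaulay scheme whose degree matrix has diagonal `a` and last column `b`: with `S = ∑ i, a i`,
the generators have degrees `S` and `S + b i - a i`, the syzygies `S + b i`. The subtraction never
truncates, since `a i ≤ S`. -/
noncomputable def kPolynomial (R : Type*) [CommRing R] {ι : Type*} [Fintype ι] (a b : ι → ℕ) :
    R[X] :=
  1 - X ^ (∑ i, a i) - ∑ i, X ^ (∑ j, a j + b i - a i) + ∑ i, X ^ (∑ j, a j + b i)

/-- The polynomial whose coefficients form the h-vector of a codimension-2 arithmetically
Cohen–Macaulay scheme whose degree matrix has diagonal `a` and last column `b`. -/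
noncomputable def hPolynomial (R : Type*) [CommRing R] {ι : Type*} [LinearOrder ι] [Fintype ι]
    [LocallyFiniteOrderBot ι] [LocallyFiniteOrderTop ι] (a b : ι → ℕ) : R[X] :=
  ∑ i, X ^ (∑ j ∈ Iio i, a j) * (∑ k ∈ range (a i), X ^ k) *
    ∑ k ∈ range (∑ j ∈ Ioi i, a j + b i), X ^ k

variable {R : Type*} [CommRing R] {ι : Type*} [Fintype ι] {a b : ι → ℕ}

lemma coeff_kPolynomial_eq_zero_of_lt {n : ℕ} (hn : ∑ i, a i + univ.sup b < n) :
    (kPolynomial R a b).coeff n = 0 := by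
  have b_le (i : ι) : b i ≤ univ.sup b := le_sup (mem_univ i)
  have syzygy_ne (i : ι) : n ≠ ∑ j, a j + b i := by have := b_le i; omega
  have generator_ne (i : ι) : n ≠ ∑ j, a j + b i - a i := by have := b_le i; omega
  have ne_zero : n ≠ 0 := by omega
  have ne_sum : n ≠ ∑ i, a i := by omega
  simp [kPolynomial, coeff_X_pow, coeff_one, syzygy_ne, generator_ne, ne_zero, ne_sum]

lemma coeff_kPolynomial_sum_add_sup [Nonempty ι] (ha : ∀ i, 1 ≤ a i) (hb : ∀ i, 1 ≤ b i) :
    (kPolynomial R a b).coeff (∑ i, a i + univ.sup b) = #{i | b i = univ.sup b} := by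
  have b_le (i : ι) : b i ≤ univ.sup b := le_sup (mem_univ i)
  have sup_ne_zero : univ.sup b ≠ 0 := by
    obtain ⟨i⟩ := ‹Nonempty ι›
    exact Nat.one_le_iff_ne_zero.mp ((hb i).trans (b_le i))
  have generator_ne (i : ι) : ∑ j, a j + univ.sup b ≠ ∑ j, a j + b i - a i := by
    have := b_le i; have := ha i; omega
  simp [kPolynomial, coeff_X_pow, coeff_one, generator_ne, sup_ne_zero, eq_comm]

lemma natDegree_kPolynomial [CharZero R] [Nonempty ι] (ha : ∀ i, 1 ≤ a i)
    (hb : ∀ i, 1 ≤ b i) : (kPolynomial R a b).natDegree = ∑ i, a i + univ.sup b := by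
  refine natDegree_eq_of_le_of_coeff_ne_zero
    (natDegree_le_iff_coeff_eq_zero.mpr fun _ ↦ coeff_kPolynomial_eq_zero_of_lt) ?_
  obtain ⟨i, hi, hmax⟩ := exists_mem_eq_sup univ univ_nonempty b
  rw [coeff_kPolynomial_sum_add_sup ha hb, Nat.cast_ne_zero]
  exact card_ne_zero_of_mem (mem_filter.mpr ⟨hi, hmax.symm⟩)

variable [LinearOrder ι] [LocallyFiniteOrderBot ι] [LocallyFiniteOrderTop ι]

variable (R a b) in
theorem one_sub_X_sq_mul_hPolynomial :
    (1 - X) ^ 2 * hPolynomial R a b = kPolynomial R a b := by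
  have generator_degree (i : ι) :
      ∑ j ∈ Iio i, a j + (∑ j ∈ Ioi i, a j + b i) = ∑ j, a j + b i - a i := by
    have := sum_Iio_add_sum_Ioi_add_self a i; omega
  have syzygy_degree (i : ι) : ∑ j, a j + b i - a i + a i = ∑ j, a j + b i := by
    have := sum_Iio_add_sum_Ioi_add_self a i; omega
  have expand (p m n : ℕ) : (X ^ p * (1 - X ^ m) * (1 - X ^ n) : R[X]) =
      X ^ p * (1 - X ^ m) - X ^ (p + n) + X ^ (p + n + m) := by ring
  simp only [hPolynomial, mul_sum univ, one_sub_sq_mul_pow_mul_geom_sum_mul_geom_sum, expand,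
    sum_add_distrib, sum_sub_distrib, sum_pow_sum_Iio_mul_one_sub_pow, generator_degree,
    syzygy_degree, kPolynomial]

variable (R a b) in
lemma coe_hPolynomial :
    (hPolynomial R a b : PowerSeries R) =
      kPolynomial R a b * PowerSeries.mk fun n ↦ (n + 1 : R) := by
  rw [← one_sub_X_sq_mul_hPolynomial]
  push_cast
  linear_combination -(hPolynomial R a b : PowerSeries R) * mk_add_one_mul_one_sub_X_sq (R := R)

/-- All subtractions inside the casts are truncated. -/
theorem coeff_hPolynomial (k : ℕ) :
    (hPolynomial R a b).coeff k = (k + 1 : R) - (k + 1 - ∑ i, a i : ℕ) -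
      ∑ i, ((k + 1 - (∑ j, a j + b i - a i) : ℕ) : R) +
      ∑ i, ((k + 1 - (∑ j, a j + b i) : ℕ) : R) := by
  rw [← coeff_coe, coe_hPolynomial]
  have coe_X_pow (n : ℕ) : coeToPowerSeries.ringHom (X ^ n : R[X]) = PowerSeries.X ^ n := by
    simp
  simp [kPolynomial, ← coeToPowerSeries.ringHom_apply, coe_X_pow, add_mul, sub_mul, sum_mul,
    coeff_X_pow_mul_mk_add_one, -map_pow]

theorem coeff_hPolynomial_of_lt (hab : ∀ i, a i ≤ b i) {k : ℕ} (hk : k < ∑ i, a i) :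
    (hPolynomial R a b).coeff k = k + 1 := by
  have generator_term (i : ι) : k + 1 - (∑ j, a j + b i - a i) = 0 := by have := hab i; omega
  have syzygy_term (i : ι) : k + 1 - (∑ j, a j + b i) = 0 := by omega
  simp [coeff_hPolynomial, generator_term, syzygy_term, Nat.sub_eq_zero_of_le hk]

theorem coeff_hPolynomial_sum (hb : ∀ i, 1 ≤ b i) (hab : ∀ i, a i ≤ b i) :
    (hPolynomial R a b).coeff (∑ i, a i) = ((∑ i, a i : ℕ) : R) - #{i | b i = a i} := by
  have generator_term (i : ι) :
      ∑ j, a j + 1 - (∑ j, a j + b i - a i) = if b i = a i then 1 else 0 := by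
    have := hab i; split_ifs <;> omega
  have syzygy_term (i : ι) : ∑ j, a j + 1 - (∑ j, a j + b i) = 0 := by have := hb i; omega
  rw [coeff_hPolynomial]
  simp [generator_term, syzygy_term]

theorem natDegree_hPolynomial_add_two [CharZero R] [Nonempty ι] (ha : ∀ i, 1 ≤ a i)
    (hb : ∀ i, 1 ≤ b i) : (hPolynomial R a b).natDegree + 2 = ∑ i, a i + univ.sup b := by
  have factor : (X - C 1) ^ 2 * hPolynomial R a b = kPolynomial R a b := by
    rw [← one_sub_X_sq_mul_hPolynomial, C_1]
    ring
  have kPolynomial_ne_zero : kPolynomial R a b ≠ 0 := by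
    refine ne_zero_of_natDegree_gt (n := 0) ?_
    rw [natDegree_kPolynomial ha hb]
    exact Nat.add_pos_left (sum_pos (fun i _ ↦ ha i) univ_nonempty) _
  have hPolynomial_ne_zero : hPolynomial R a b ≠ 0 :=
    right_ne_zero_of_mul (factor ▸ kPolynomial_ne_zero)
  rw [← natDegree_kPolynomial (R := R) ha hb, ← factor,
    ((monic_X_sub_C 1).pow 2).natDegree_mul' hPolynomial_ne_zero, (monic_X_sub_C 1).natDegree_pow,
    natDegree_X_sub_C, mul_one, add_comm]

end HVector

theorem stmt_5_general {R : Type*} [CommRing R] [CharZero R] {ι : Type*} [LinearOrder ι]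
    [Fintype ι] [LocallyFiniteOrderBot ι] [LocallyFiniteOrderTop ι] [Nonempty ι]
    (a b : ι → ℕ) (ha : ∀ i, 1 ≤ a i) (hb : ∀ i, 1 ≤ b i) :
    ((∀ i, a i ≤ b i) →
      (∀ k < ∑ i, a i, (hPolynomial R a b).coeff k = k + 1) ∧
      (hPolynomial R a b).coeff (∑ i, a i) = ((∑ i, a i : ℕ) : R) - #{i | b i = a i}) ∧
    (hPolynomial R a b).natDegree + 2 = ∑ i, a i + univ.sup b :=
  ⟨fun hab ↦ ⟨fun _ ↦ coeff_hPolynomial_of_lt hab, coeff_hPolynomial_sum hb hab⟩,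
    natDegree_hPolynomial_add_two ha hb⟩

/-- Properties of the h-vector `h(z) = ∑ᵢ z^(pᵢ) (1+⋯+z^(aᵢ-1)) (1+⋯+z^(qᵢ-1))`:
(i) `h_k = k + 1` for `0 ≤ k ≤ S - 1`;
(ii) `h_S = S - #{i : bᵢ = aᵢ}`;
(iii) `deg h = S + maxᵢ bᵢ - 2`. -/
theorem stmt_5 (t : ℕ) (ht : 1 ≤ t) (a b : Fin t → ℕ)
    (ha : ∀ i, 1 ≤ a i) (hb : ∀ i, 1 ≤ b i)
    (hba : ∀ i, a i ≤ b i)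
    (S : ℕ) (hS : S = ∑ i, a i)
    (p q : Fin t → ℕ)
    (hp : ∀ i, p i = ∑ k ∈ Finset.Iio i, a k)
    (hq : ∀ i, q i = (∑ k ∈ Finset.Ioi i, a k) + b i)
    (h : Polynomial ℤ)
    (hh : h = ∑ i, X ^ (p i) * (∑ k ∈ Finset.range (a i), X ^ k) *
      (∑ k ∈ Finset.range (q i), X ^ k)) :
    (∀ k : ℕ, k ≤ S - 1 → h.coeff k = (k : ℤ) + 1) ∧
    h.coeff S = (S : ℤ) - ((Finset.univ.filter fun i => b i = a i).card : ℤ) ∧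
    h.natDegree = S + Finset.univ.sup b - 2 := by
  have : Nonempty (Fin t) := ⟨⟨0, ht⟩⟩
  obtain rfl : h = hPolynomial ℤ a b := by simp only [hh, hp, hq, hPolynomial]
  obtain ⟨hcoeff, hdegree⟩ := stmt_5_general (R := ℤ) a b ha hb
  have hS_pos : 0 < S := hS ▸ sum_pos (fun i _ ↦ ha i) univ_nonempty
  subst hS
  exact ⟨fun k hk ↦ (hcoeff hba).1 k (Nat.lt_of_le_pred hS_pos hk), (hcoeff hba).2,
    Nat.eq_sub_of_add_eq hdegree⟩
end

section
/- Let k be a field and let a ≥ 3 be an odd integer. Let φ : k[x_0, x_1, x_2, x_3] → k[s, t] be the k-algebra homomorphism determined by φ(x_0) = s^{2a}, φ(x_1) = s^{a+2} t^{a−2}, φ(x_2) = s^{a−2} t^{a+2}, φ(x_3) = t^{2a}. Then the kernel of φ is the ideal generated by x_0 x_3 − x_1 x_2 together with the five binomials x_0^{4−i} x_2^{a−2+i} − x_1^{a+2−i} x_3^{i} for i = 0, 1, 2, 3, 4. -/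
open MvPolynomial

/-!
The curve lies on the quadric `x₀x₃ = x₁x₂`, the image of `P¹ × P¹` under
`x₀ = y₀z₀, x₁ = y₀z₁, x₂ = y₁z₀, x₃ = y₁z₁`, and it is cut out there by
`y₀^n z₁^(n+d) = y₁^n z₀^(n+d)`, where `y₀ = s^(n+d), y₁ = t^(n+d), z₀ = s^n, z₁ = t^n` (the case
of interest being `n = a - 2` and `d = 4`).

The kernel is spanned by the differences of monomials with the same image. Arranged as a table
`u₀ u₁ / u₂ u₃`, the exponents of a monomial have row sums (its degrees in `y₀, y₁`) and column
sums (its degrees in `z₀, z₁`), and modulo the quadric the monomial depends on these margins only.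
As `n` and `n + d` are coprime, two monomials have the same image precisely when their margins
differ by a multiple of `(n, -n; -(n+d), n+d)`; a shift by one such step amounts to exchanging the
two terms of one of the binomials `x₀^j x₂^(n+i) - x₁^(n+j) x₃^i`, `i + j = d`.
-/

section ToricIdeal

variable {σ τ R : Type*} [CommRing R]

lemma aeval_monomial_monomial_one (f : σ → τ →₀ ℕ) (u : σ →₀ ℕ) :
    aeval (fun i => monomial (f i) (1 : R)) (monomial u (1 : R)) =
      monomial (Finsupp.linearCombination ℕ f u) 1 := by
  simp only [aeval_monomial, Finsupp.linearCombination_apply, monomial_finsupp_sum_index,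
    monomial_pow, map_one, one_pow]

theorem ker_aeval_monomial_eq_span_binomials (f : σ → τ →₀ ℕ) :
    RingHom.ker (aeval (R := R) fun i => monomial (f i) (1 : R)) =
      Ideal.span {p | ∃ u v : σ →₀ ℕ,
        Finsupp.linearCombination ℕ f u = Finsupp.linearCombination ℕ f v ∧
          p = monomial u 1 - monomial v 1} := by
  set E := Finsupp.linearCombination ℕ f
  set φ := aeval (R := R) fun i => monomial (f i) (1 : R)
  set I := Ideal.span {p : MvPolynomial σ R | ∃ u v, E u = E v ∧ p = monomial u 1 - monomial v 1}
  have map_monomial (u) : φ (monomial u 1) = monomial (E u) 1 := aeval_monomial_monomial_one f u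
  refine le_antisymm (fun p hp => ?_) (Ideal.span_le.2 ?_)
  · -- Lifting each monomial to a chosen preimage gives a linear inverse of `φ` modulo `I`.
    let lift : MvPolynomial τ R →ₗ[R] MvPolynomial σ R :=
      (basisMonomials τ R).constr R fun w => monomial (Function.invFun E w) 1
    have lift_monomial (w) : lift (monomial w 1) = monomial (Function.invFun E w) 1 := by
      simpa only [coe_basisMonomials] using (basisMonomials τ R).constr_basis R _ w
    have sub_lift_mem (p) : p - lift (φ p) ∈ I := by
      induction p using MvPolynomial.induction_on' with
      | monomial u a =>
        have hu : monomial u 1 - lift (φ (monomial u 1)) ∈ I := by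
          rw [map_monomial, lift_monomial]
          exact Ideal.subset_span ⟨u, _, (Function.invFun_eq ⟨u, rfl⟩).symm, rfl⟩
        rw [← mul_one a, ← smul_eq_mul, ← smul_monomial, map_smul, map_smul, ← smul_sub]
        exact Submodule.smul_of_tower_mem I a hu
      | add p q hp hq =>
        rw [map_add, map_add, add_sub_add_comm]
        exact I.add_mem hp hq
    simpa only [RingHom.mem_ker.1 hp, map_zero, sub_zero] using sub_lift_mem p
  · rintro _ ⟨u, v, huv, rfl⟩
    rw [SetLike.mem_coe, RingHom.mem_ker, map_sub, map_monomial, map_monomial, huv, sub_self]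

end ToricIdeal

section Arithmetic

lemma exists_fin_four_of_margins {a b c e : ℕ} (h : a + b = c + e) :
    ∃ w : Fin 4 → ℕ, w 0 + w 1 = a ∧ w 2 + w 3 = b ∧ w 0 + w 2 = c ∧ w 1 + w 3 = e := by
  refine ⟨![min a c, a - min a c, c - min a c, b - (c - min a c)], ?_⟩
  simp only [Matrix.cons_val]
  omega

lemma exists_eq_add_mul_of_coprime {p q a a' c c' : ℕ} (hp : 0 < p) (hpq : p.Coprime q)
    (h : p * a + q * c = p * a' + q * c') (hc : c' ≤ c) :
    ∃ r, a' = a + q * r ∧ c = c' + p * r := by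
  obtain ⟨e, rfl⟩ := Nat.exists_eq_add_of_le hc
  have hsum : p * a + q * e = p * a' := by linarith
  have hdvd : p ∣ q * e := (Nat.dvd_add_right (dvd_mul_right p a)).1 ⟨a', hsum⟩
  obtain ⟨r, rfl⟩ := hpq.dvd_of_dvd_mul_left hdvd
  exact ⟨r, Nat.eq_of_mul_eq_mul_left hp (by linarith), rfl⟩

end Arithmetic

section Monoid

variable {M : Type*} [CommMonoid M] {x : Fin 4 → M} {n d : ℕ}

lemma prod_pow_eq_of_margins_eq (hx : x 0 * x 3 = x 1 * x 2) {u v : Fin 4 → ℕ}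
    (h01 : u 0 + u 1 = v 0 + v 1) (h23 : u 2 + u 3 = v 2 + v 3) (h02 : u 0 + u 2 = v 0 + v 2) :
    ∏ i, x i ^ u i = ∏ i, x i ^ v i := by
  wlog h : u 0 ≤ v 0 generalizing u v
  · exact (this h01.symm h23.symm h02.symm (by omega)).symm
  obtain ⟨t, h0⟩ := Nat.exists_eq_add_of_le h
  obtain ⟨h1, h2, h3⟩ : u 1 = v 1 + t ∧ u 2 = v 2 + t ∧ v 3 = u 3 + t := by omega
  have hxt : x 0 ^ t * x 3 ^ t = x 1 ^ t * x 2 ^ t := by rw [← mul_pow, hx, mul_pow]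
  simp only [Fin.prod_univ_four, h0, h1, h2, h3, pow_add]
  calc
    _ = x 0 ^ u 0 * x 1 ^ v 1 * x 2 ^ v 2 * x 3 ^ u 3 * (x 1 ^ t * x 2 ^ t) := by ac_rfl
    _ = x 0 ^ u 0 * x 1 ^ v 1 * x 2 ^ v 2 * x 3 ^ u 3 * (x 0 ^ t * x 3 ^ t) := by rw [hxt]
    _ = _ := by ac_rfl

/-- The equation of the quadric and the binomial equations of the curve of bidegree `(n, n + d)` on
it, for a quadruple in a commutative monoid. The binomials are indexed by `i + j = d`, which keeps
subtraction out of the exponents. -/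
structure CurveRelations (n d : ℕ) (x : Fin 4 → M) : Prop where
  quadric : x 0 * x 3 = x 1 * x 2
  binomial : ∀ i j, i + j = d → x 0 ^ j * x 2 ^ (n + i) = x 1 ^ (n + j) * x 3 ^ i

namespace CurveRelations

lemma exists_prod_pow_eq_of_margins_shift (hx : CurveRelations n d x) {u : Fin 4 → ℕ}
    (h23 : n ≤ u 2 + u 3) (h02 : n + d ≤ u 0 + u 2) :
    ∃ v : Fin 4 → ℕ, v 0 + v 1 = u 0 + u 1 + n ∧ v 2 + v 3 + n = u 2 + u 3 ∧
      v 0 + v 2 + (n + d) = u 0 + u 2 ∧ ∏ i, x i ^ u i = ∏ i, x i ^ v i := by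
  obtain ⟨i, j, hij, hj, hi⟩ : ∃ i j, i + j = d ∧ j ≤ u 0 + u 1 ∧ n + i ≤ u 2 + u 3 :=
    ⟨min d (u 2 + u 3 - n), d - (u 2 + u 3 - n), by omega⟩
  -- `w` is the cofactor of `x₀^j x₂^(n+i)` in a monomial with the same margins as `u`.
  obtain ⟨w, w01, w23, w02, -⟩ := exists_fin_four_of_margins
    (show (u 0 + u 1 - j) + (u 2 + u 3 - (n + i)) = (u 0 + u 2 - (n + d)) + (u 1 + u 3) by omega)
  have prod_pow_add (e : Fin 4 → ℕ) : ∏ l, x l ^ (w + e) l =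
      (∏ l, x l ^ w l) * (x 0 ^ e 0 * x 1 ^ e 1 * x 2 ^ e 2 * x 3 ^ e 3) := by
    simp only [Pi.add_apply, pow_add, Finset.prod_mul_distrib,
      Fin.prod_univ_four fun l => x l ^ e l]
  have hprod : ∏ l, x l ^ u l = ∏ l, x l ^ (w + ![0, n + j, 0, i]) l := calc
    ∏ l, x l ^ u l = ∏ l, x l ^ (w + ![j, 0, n + i, 0]) l := by
      apply prod_pow_eq_of_margins_eq hx.quadric <;>
        simp only [Pi.add_apply, Matrix.cons_val] <;> omega
    _ = (∏ l, x l ^ w l) * (x 0 ^ j * x 2 ^ (n + i)) := by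
      simp only [prod_pow_add, Matrix.cons_val, pow_zero, mul_one]
    _ = (∏ l, x l ^ w l) * (x 1 ^ (n + j) * x 3 ^ i) := by rw [hx.binomial i j hij]
    _ = ∏ l, x l ^ (w + ![0, n + j, 0, i]) l := by
      simp only [prod_pow_add, Matrix.cons_val, pow_zero, mul_one, one_mul]
  refine ⟨w + ![0, n + j, 0, i], ?_, ?_, ?_, hprod⟩ <;>
    simp only [Pi.add_apply, Matrix.cons_val] <;> omega

lemma prod_pow_eq_of_margins_shift_mul (hx : CurveRelations n d x) (r : ℕ) {u v : Fin 4 → ℕ}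
    (h01 : v 0 + v 1 = u 0 + u 1 + n * r) (h23 : v 2 + v 3 + n * r = u 2 + u 3)
    (h02 : v 0 + v 2 + (n + d) * r = u 0 + u 2) :
    ∏ i, x i ^ u i = ∏ i, x i ^ v i := by
  induction r generalizing u with
  | zero => exact prod_pow_eq_of_margins_eq hx.quadric (by omega) (by omega) (by omega)
  | succ r ih =>
    rw [mul_add_one] at h01 h23 h02
    obtain ⟨w, w01, w23, w02, huw⟩ :=
      hx.exists_prod_pow_eq_of_margins_shift (u := u) (by omega) (by omega)
    exact huw.trans (ih (by omega) (by omega) (by omega))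

lemma prod_pow_eq_of_weights_eq (hx : CurveRelations n d x) (hnd : n.Coprime d)
    {u v : Fin 4 → ℕ}
    (hs : (n + d) * (u 0 + u 1) + n * (u 0 + u 2) = (n + d) * (v 0 + v 1) + n * (v 0 + v 2))
    (ht : (n + d) * (u 2 + u 3) + n * (u 1 + u 3) = (n + d) * (v 2 + v 3) + n * (v 1 + v 3)) :
    ∏ i, x i ^ u i = ∏ i, x i ^ v i := by
  wlog h02 : v 0 + v 2 ≤ u 0 + u 2 generalizing u v
  · exact (this hs.symm ht.symm (by omega)).symm
  have hpos : 0 < n + d := by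
    rcases n.eq_zero_or_pos with rfl | hn
    · simp only [(Nat.coprime_zero_left d).1 hnd, zero_add, zero_lt_one]
    · omega
  have htotal : u 0 + u 1 + u 2 + u 3 = v 0 + v 1 + v 2 + v 3 :=
    Nat.eq_of_mul_eq_mul_left (Nat.add_pos_right n hpos) (by linarith)
  obtain ⟨r, h01, h02⟩ :=
    exists_eq_add_mul_of_coprime hpos (Nat.coprime_self_add_left.2 hnd.symm) hs h02
  exact hx.prod_pow_eq_of_margins_shift_mul r h01 (by omega) h02.symm

end CurveRelations

end Monoid

section Curve

variable {R : Type*} [CommRing R] {n d : ℕ}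

/-- The exponents of `s = X 0` and `t = X 1` in the four monomials parametrizing the curve of
bidegree `(n, n + d)`. -/
noncomputable def curveExponent (n d : ℕ) : Fin 4 → Fin 2 →₀ ℕ :=
  ![.single 0 (2 * n + d), .single 0 (n + d) + .single 1 n,
    .single 0 n + .single 1 (n + d), .single 1 (2 * n + d)]

lemma monomial_curveExponent (i : Fin 4) :
    monomial (curveExponent n d i) (1 : R) =
      ![X 0 ^ (2 * n + d), X 0 ^ (n + d) * X 1 ^ n,
        X 0 ^ n * X 1 ^ (n + d), X 1 ^ (2 * n + d)] i := by
  fin_cases i <;> simp [curveExponent, X_pow_eq_monomial, monomial_mul]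

lemma linearCombination_curveExponent_zero (u : Fin 4 →₀ ℕ) :
    Finsupp.linearCombination ℕ (curveExponent n d) u 0 =
      (n + d) * (u 0 + u 1) + n * (u 0 + u 2) := by
  simp only [Finsupp.linearCombination_apply, zero_smul, implies_true, Finsupp.sum_fintype,
    Fin.sum_univ_four, curveExponent, Matrix.cons_val, Finsupp.add_apply, Finsupp.smul_apply,
    Finsupp.single_apply, if_true, if_false, one_ne_zero, smul_eq_mul]
  ring

lemma linearCombination_curveExponent_one (u : Fin 4 →₀ ℕ) :
    Finsupp.linearCombination ℕ (curveExponent n d) u 1 =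
      (n + d) * (u 2 + u 3) + n * (u 1 + u 3) := by
  simp only [Finsupp.linearCombination_apply, zero_smul, implies_true, Finsupp.sum_fintype,
    Fin.sum_univ_four, curveExponent, Matrix.cons_val, Finsupp.add_apply, Finsupp.smul_apply,
    Finsupp.single_apply, if_true, if_false, zero_ne_one, smul_eq_mul]
  ring

lemma ker_aeval_curveExponent_le (hnd : n.Coprime d) {I : Ideal (MvPolynomial (Fin 4) R)}
    (hI : CurveRelations n d fun i => Ideal.Quotient.mk I (X i)) :
    RingHom.ker (aeval (R := R) fun i => monomial (curveExponent n d i) (1 : R)) ≤ I := by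
  rw [ker_aeval_monomial_eq_span_binomials, Ideal.span_le]
  rintro _ ⟨u, v, huv, rfl⟩
  have mk_monomial (w : Fin 4 →₀ ℕ) :
      Ideal.Quotient.mk I (monomial w 1) = ∏ i, Ideal.Quotient.mk I (X i) ^ w i := by
    simp [monomial_eq, Finsupp.prod_fintype]
  rw [SetLike.mem_coe, ← Ideal.Quotient.mk_eq_mk_iff_sub_mem, mk_monomial, mk_monomial]
  apply hI.prod_pow_eq_of_weights_eq hnd
  · simpa only [linearCombination_curveExponent_zero] using DFunLike.congr_fun huv 0
  · simpa only [linearCombination_curveExponent_one] using DFunLike.congr_fun huv 1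

end Curve

theorem stmt_8_general (R : Type*) [CommRing R] (n d : ℕ) (hnd : n.Coprime d) :
    RingHom.ker (aeval (R := R) (fun i : Fin 4 =>
      ![(X 0 : MvPolynomial (Fin 2) R) ^ (2 * n + d),
        X 0 ^ (n + d) * X 1 ^ n,
        X 0 ^ n * X 1 ^ (n + d),
        X 1 ^ (2 * n + d)] i)) =
    Ideal.span ({X 0 * X 3 - X 1 * X 2} ∪
      Set.range (fun i : Fin (d + 1) =>
        (X 0 : MvPolynomial (Fin 4) R) ^ (d - (i : ℕ)) * X 2 ^ (n + (i : ℕ))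
          - X 1 ^ (n + d - (i : ℕ)) * X 3 ^ (i : ℕ))) := by
  have add_add_sub_left (i j : ℕ) : n + (i + j) - i = n + j := by omega
  refine le_antisymm ?_ (Ideal.span_le.2 ?_)
  · simp only [← monomial_curveExponent]
    refine ker_aeval_curveExponent_le hnd ⟨?_, ?_⟩
    · simp only [← map_mul]
      exact Ideal.Quotient.eq.2 (Ideal.subset_span (.inl rfl))
    · rintro i j rfl
      simp only [← map_mul, ← map_pow]
      refine Ideal.Quotient.eq.2 (Ideal.subset_span (.inr ⟨⟨i, by omega⟩, ?_⟩))
      simp only [add_add_sub_left, Nat.add_sub_cancel_left]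
  · rintro _ (rfl | ⟨⟨i, hi⟩, rfl⟩)
    · simp only [SetLike.mem_coe, RingHom.mem_ker, map_sub, map_mul, aeval_X, Matrix.cons_val]
      ring
    · obtain ⟨j, rfl⟩ := Nat.exists_eq_add_of_le (Nat.lt_succ_iff.1 hi)
      simp only [SetLike.mem_coe, RingHom.mem_ker, map_sub, map_mul, map_pow, aeval_X,
        Matrix.cons_val, add_add_sub_left, Nat.add_sub_cancel_left]
      ring

/-- Remark `rat2`, odd case: for `a ≥ 3` odd, the kernel of the `k`-algebra map
`k[x₀,x₁,x₂,x₃] → k[s,t]`, `x₀ ↦ s^(2a)`, `x₁ ↦ s^(a+2)t^(a-2)`,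
`x₂ ↦ s^(a-2)t^(a+2)`, `x₃ ↦ t^(2a)` is generated by `x₀x₃ - x₁x₂` together
with the five binomials `x₀^(4-i) x₂^(a-2+i) - x₁^(a+2-i) x₃^i`, `i = 0,…,4`. -/
theorem stmt_8 (k : Type*) [Field k] (a : ℕ) (ha : 3 ≤ a) (hao : Odd a) :
    RingHom.ker (aeval (R := k) (fun i : Fin 4 =>
      ![(X 0 : MvPolynomial (Fin 2) k) ^ (2 * a),
        X 0 ^ (a + 2) * X 1 ^ (a - 2),
        X 0 ^ (a - 2) * X 1 ^ (a + 2),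
        X 1 ^ (2 * a)] i)) =
    Ideal.span ({X 0 * X 3 - X 1 * X 2} ∪
      Set.range (fun i : Fin 5 =>
        (X 0 : MvPolynomial (Fin 4) k) ^ (4 - (i : ℕ)) * X 2 ^ (a - 2 + (i : ℕ))
          - X 1 ^ (a + 2 - (i : ℕ)) * X 3 ^ (i : ℕ))) := by
  obtain ⟨n, rfl⟩ := Nat.exists_eq_add_of_le' (show 2 ≤ a by omega)
  exact stmt_8_general k n 4 (.pow_right 2 (Nat.coprime_two_right.2 (by grind)))
end
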